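/- A ring R is a uniquely clean ring if and only if R is a uniquely √J-clean ring. -/

import Mathlib

/-- `√J(R)`: the set of elements some positive power of which lies in the
Jacobson radical `J(R)` of the ring `R`. -/
def sqrtJ (R : Type*) [Ring R] : Set R :=
  {z : R | ∃ n : ℕ, 1 ≤ n ∧ z ^ n ∈ (⊥ : TwoSidedIdeal R).jacobson}

/-- `R` is a `√J`-clean ring: every element is the sum of an idempotent and an
element of `√J(R)`. -/
def IsSqrtJCleanRing (R : Type*) [Ring R] : Prop :=
  ∀ a : R, ∃ e z : R, IsIdempotentElem e ∧ z ∈ sqrtJ R ∧ a = e + z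

/-- `R` is a strongly `√J`-clean ring: every element is the sum of an idempotent
and an element of `√J(R)` that commute with each other. -/
def IsStronglySqrtJCleanRing (R : Type*) [Ring R] : Prop :=
  ∀ a : R, ∃ e z : R, IsIdempotentElem e ∧ z ∈ sqrtJ R ∧ a = e + z ∧ e * z = z * e

/-- `R` is a uniquely `√J`-clean ring: every element is uniquely the sum of an
idempotent and an element of `√J(R)`. -/
def IsUniquelySqrtJCleanRing (R : Type*) [Ring R] : Prop :=
  ∀ a : R, ∃! p : R × R, IsIdempotentElem p.1 ∧ p.2 ∈ sqrtJ R ∧ a = p.1 + p.2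

/-- `R` is a uniquely clean ring: every element is uniquely the sum of an
idempotent and a unit. -/
def IsUniquelyCleanRing (R : Type*) [Ring R] : Prop :=
  ∀ a : R, ∃! p : R × R, IsIdempotentElem p.1 ∧ IsUnit p.2 ∧ a = p.1 + p.2

/-! Adding `1` to the non-idempotent summand carries decompositions of `a` to decompositions of
`1 + a`, so both notions coincide as soon as `z ∈ √J(R)` is equivalent to `1 + z` being a unit.
One direction holds in every ring. For the other, uniqueness of either kind of decomposition forces
idempotents to be central. Then, given a unit `1 + z`, one decomposes `1 + z` (in the `√J`-clean
case) or `1 + y * z` for arbitrary `y` (in the clean case) and shows that a suitable central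
idempotent `e` vanishes. In the first case `e ∈ J(R)`. In the second both `z` and `1 + z` are
invertible in the corner of `e`, so `e + (z * e + (1 - e)) = 0 + ((1 + z) * e + (1 - e))` gives two
clean decompositions of one element, whence `e = 0`. -/

section JacobsonRadical

variable {R : Type*} [Ring R]

theorem exists_mul_one_add_eq_one_of_mem_jacobson {x : R}
    (hx : x ∈ (⊥ : TwoSidedIdeal R).jacobson) : ∃ z, z * (1 + x) = 1 := by
  obtain ⟨z, hz⟩ := TwoSidedIdeal.mem_jacobson_iff.1 hx 1
  rw [TwoSidedIdeal.mem_bot, sub_eq_zero, mul_one, ← mul_add_one, add_comm] at hz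
  exact ⟨z, hz⟩

theorem mem_jacobson_bot_iff_forall_isUnit {x : R} :
    x ∈ (⊥ : TwoSidedIdeal R).jacobson ↔ ∀ y, IsUnit (1 + y * x) := by
  refine ⟨fun hx y ↦ ?_, fun h ↦ TwoSidedIdeal.mem_jacobson_iff.2 fun y ↦ ?_⟩
  · have hyx := TwoSidedIdeal.mul_mem_left _ y x hx
    obtain ⟨z, hz⟩ := exists_mul_one_add_eq_one_of_mem_jacobson hyx
    -- `z = 1 - z * (y * x)` is again of the form `1 + J(R)`, so it has a left inverse as well.
    obtain ⟨t, ht⟩ :=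
      exists_mul_one_add_eq_one_of_mem_jacobson (TwoSidedIdeal.mul_mem_left _ (-z) _ hyx)
    have hz_eq : 1 + -z * (y * x) = z := by
      rw [← hz]; noncomm_ring
    rw [hz_eq] at ht
    exact ⟨⟨1 + y * x, z, left_inv_eq_right_inv ht hz ▸ ht, hz⟩, rfl⟩
  · obtain ⟨z, hz⟩ := (h y).exists_left_inv
    refine ⟨z, ?_⟩
    rw [TwoSidedIdeal.mem_bot, sub_eq_zero, ← hz]
    noncomm_ring

theorem eq_zero_of_isIdempotentElem_of_mem_jacobson {e : R} (he : IsIdempotentElem e)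
    (hmem : e ∈ (⊥ : TwoSidedIdeal R).jacobson) : e = 0 := by
  have hunit : IsUnit (1 - e) := by
    simpa [sub_eq_add_neg] using mem_jacobson_bot_iff_forall_isUnit.1 hmem (-1)
  exact hunit.mul_right_eq_zero.1 he.one_sub_mul_self

theorem mem_sqrtJ_of_mem_jacobson {z : R} (hz : z ∈ (⊥ : TwoSidedIdeal R).jacobson) :
    z ∈ sqrtJ R :=
  ⟨1, le_rfl, by rwa [pow_one]⟩

theorem mem_sqrtJ_of_isNilpotent {z : R} (hz : IsNilpotent z) : z ∈ sqrtJ R := by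
  obtain ⟨n, hn⟩ := hz
  exact ⟨n + 1, n.succ_pos, by rw [pow_succ, hn, zero_mul]; exact TwoSidedIdeal.zero_mem _⟩

theorem mul_mem_sqrtJ_of_commute {a z : R} (hcomm : Commute a z) (hz : z ∈ sqrtJ R) :
    a * z ∈ sqrtJ R := by
  obtain ⟨n, hn, hzn⟩ := hz
  exact ⟨n, hn, hcomm.mul_pow n ▸ TwoSidedIdeal.mul_mem_left _ _ _ hzn⟩

theorem isUnit_one_add_of_mem_sqrtJ {z : R} (hz : z ∈ sqrtJ R) : IsUnit (1 + z) := by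
  obtain ⟨n, -, hn⟩ := mul_mem_sqrtJ_of_commute (Commute.neg_one_left z) hz
  rw [neg_one_mul] at hn
  have hunit : IsUnit (1 - (-z) ^ n) := by
    simpa [sub_eq_add_neg] using mem_jacobson_bot_iff_forall_isUnit.1 hn (-1)
  have hcomm : Commute (1 - -z) (∑ i ∈ Finset.range n, (-z) ^ i) :=
    (mul_neg_geom_sum (-z) n).trans (geom_sum_mul_neg (-z) n).symm
  rw [← mul_neg_geom_sum, hcomm.isUnit_mul_iff, sub_neg_eq_add] at hunit
  exact hunit.1

theorem eq_zero_of_isIdempotentElem_of_mul_mem_sqrtJ {e u : R} (he : IsIdempotentElem e)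
    (hu : IsUnit u) (hcomm : Commute e u) (hmem : e * u ∈ sqrtJ R) : e = 0 := by
  obtain ⟨n, hn, heu⟩ := hmem
  obtain ⟨v, hv⟩ := (hu.pow n).exists_right_inv
  rw [hcomm.mul_pow, he.pow_eq (by lia)] at heu
  refine eq_zero_of_isIdempotentElem_of_mem_jacobson he ?_
  simpa only [mul_assoc, hv, mul_one] using TwoSidedIdeal.mul_mem_right _ _ v heu

end JacobsonRadical

section Idempotents

variable {R : Type*} [Ring R]

theorem commute_of_isIdempotentElem_of_isNilpotent_sub
    (hsep : ∀ e f : R, IsIdempotentElem e → IsIdempotentElem f → IsNilpotent (f - e) → e = f)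
    {e : R} (he : IsIdempotentElem e) (r : R) : Commute e r := by
  -- `e + e * r * (1 - e)` is an idempotent differing from `e` by an element of square zero.
  have mul_mul_one_sub {e : R} (he : IsIdempotentElem e) : e * r * (1 - e) = 0 := by
    set n := e * r * (1 - e) with hn
    have hen : e * n = n := by rw [hn, ← mul_assoc, ← mul_assoc, he.eq]
    have hne : n * e = 0 := by rw [hn, mul_assoc, he.one_sub_mul_self, mul_zero]
    have hnn : n * n = 0 := by
      nth_rw 2 [← hen]
      rw [← mul_assoc, hne, zero_mul]
    have hidem : IsIdempotentElem (e + n) := by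
      rw [IsIdempotentElem, add_mul, mul_add, mul_add, he.eq, hen, hne, hnn, add_zero, add_zero]
    have hnil : IsNilpotent (e + n - e) := ⟨2, by rw [add_sub_cancel_left, sq, hnn]⟩
    exact left_eq_add.1 (hsep e (e + n) he hidem hnil)
  have hleft : e * r = e * r * e := by
    simpa only [mul_sub, mul_one, sub_eq_zero] using mul_mul_one_sub he
  have hright : r * e = e * r * e := by
    simpa only [sub_sub_cancel, sub_mul, one_mul, sub_eq_zero] using mul_mul_one_sub he.one_sub
  exact hleft.trans hright.symm

theorem isDedekindFiniteMonoid_of_commute_isIdempotentElem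
    (hcomm : ∀ e : R, IsIdempotentElem e → ∀ r, Commute e r) : IsDedekindFiniteMonoid R where
  mul_eq_one_symm {a b} hab := by
    have hidem : IsIdempotentElem (b * a) := by
      rw [IsIdempotentElem, mul_assoc, ← mul_assoc a, hab, one_mul]
    calc b * a = b * a * (a * b) := by rw [hab, mul_one]
      _ = a * (b * a) * b := by rw [← mul_assoc, (hcomm _ hidem a).eq]
      _ = a * b * (a * b) := by simp only [mul_assoc]
      _ = 1 := by rw [hab, mul_one]

theorem isUnit_mul_add_one_sub_of_mul_mul_eq [IsDedekindFiniteMonoid R] {e p q : R}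
    (he : IsIdempotentElem e) (hcomm : Commute e p) (hqp : q * p * e = e) :
    IsUnit (p * e + (1 - e)) := by
  refine IsUnit.of_mul_eq_one_right (q * e + (1 - e)) ?_
  have hcorner : q * e * (p * e) = e := by
    rw [← hcomm.eq, mul_assoc, ← mul_assoc e, he.eq, hcomm.eq, ← mul_assoc, hqp]
  have hright : q * e * (1 - e) = 0 := by rw [mul_assoc, he.mul_one_sub_self, mul_zero]
  have hleft : (1 - e) * (p * e) = 0 := by
    rw [← hcomm.eq, ← mul_assoc, he.one_sub_mul_self, zero_mul]
  rw [add_mul, mul_add, mul_add, hcorner, hright, hleft, he.one_sub.eq, add_zero, zero_add,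
    add_sub_cancel]

end Idempotents

namespace IsUniquelyCleanRing

variable {R : Type*} [Ring R]

theorem eq_of_add_eq_add (h : IsUniquelyCleanRing R) {e f u v : R}
    (he : IsIdempotentElem e) (hu : IsUnit u) (hf : IsIdempotentElem f) (hv : IsUnit v)
    (hadd : e + u = f + v) : e = f :=
  congrArg Prod.fst <| (h (e + u)).unique (y₁ := (e, u)) (y₂ := (f, v)) ⟨he, hu, rfl⟩ ⟨hf, hv, hadd⟩

theorem commute_of_isIdempotentElem (h : IsUniquelyCleanRing R) (e : R)
    (he : IsIdempotentElem e) (r : R) : Commute e r :=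
  commute_of_isIdempotentElem_of_isNilpotent_sub
    (fun _ _ he hf hnil ↦ h.eq_of_add_eq_add he hnil.isUnit_one_add hf isUnit_one (by abel)) he r

theorem eq_zero_of_isUnit_one_add (h : IsUniquelyCleanRing R) {e x z : R}
    (he : IsIdempotentElem e) (hz : IsUnit (1 + z)) (hxz : x * z * e = e) : e = 0 := by
  have := isDedekindFiniteMonoid_of_commute_isIdempotentElem h.commute_of_isIdempotentElem
  have hcomm := h.commute_of_isIdempotentElem e he
  obtain ⟨v, hv⟩ := hz.exists_left_inv
  have hunit : IsUnit (z * e + (1 - e)) :=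
    isUnit_mul_add_one_sub_of_mul_mul_eq he (hcomm z) hxz
  have hunit_one_add : IsUnit ((1 + z) * e + (1 - e)) :=
    isUnit_mul_add_one_sub_of_mul_mul_eq he (hcomm (1 + z)) (by rw [hv, one_mul])
  exact h.eq_of_add_eq_add he hunit .zero hunit_one_add (by noncomm_ring)

theorem mem_jacobson_of_isUnit_one_add (h : IsUniquelyCleanRing R) {z : R}
    (hz : IsUnit (1 + z)) : z ∈ (⊥ : TwoSidedIdeal R).jacobson := by
  refine mem_jacobson_bot_iff_forall_isUnit.2 fun y ↦ ?_
  obtain ⟨⟨e, w⟩, ⟨he, hw, hadd⟩, -⟩ := h (1 + y * z)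
  dsimp only at he hw hadd
  obtain ⟨v, hv⟩ := hw.exists_left_inv
  have hwe : w * e = y * z * e := by
    rw [← add_sub_cancel_left e w, ← hadd, sub_mul, add_mul, one_mul, he.eq, add_sub_cancel_left]
  have hcorner : v * y * z * e = e := by
    rw [mul_assoc v, mul_assoc v, ← hwe, ← mul_assoc, hv, one_mul]
  rwa [hadd, h.eq_zero_of_isUnit_one_add he hz hcorner, zero_add]

theorem mem_sqrtJ_iff_isUnit_one_add (h : IsUniquelyCleanRing R) (z : R) :
    z ∈ sqrtJ R ↔ IsUnit (1 + z) :=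
  ⟨isUnit_one_add_of_mem_sqrtJ,
    fun hz ↦ mem_sqrtJ_of_mem_jacobson (h.mem_jacobson_of_isUnit_one_add hz)⟩

end IsUniquelyCleanRing

namespace IsUniquelySqrtJCleanRing

variable {R : Type*} [Ring R]

theorem eq_of_add_eq_add (h : IsUniquelySqrtJCleanRing R) {e f z w : R}
    (he : IsIdempotentElem e) (hz : z ∈ sqrtJ R) (hf : IsIdempotentElem f) (hw : w ∈ sqrtJ R)
    (hadd : e + z = f + w) : e = f :=
  congrArg Prod.fst <| (h (e + z)).unique (y₁ := (e, z)) (y₂ := (f, w)) ⟨he, hz, rfl⟩ ⟨hf, hw, hadd⟩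

theorem commute_of_isIdempotentElem (h : IsUniquelySqrtJCleanRing R) {e : R}
    (he : IsIdempotentElem e) (r : R) : Commute e r :=
  commute_of_isIdempotentElem_of_isNilpotent_sub
    (fun _ _ he hf hnil ↦ h.eq_of_add_eq_add he (mem_sqrtJ_of_isNilpotent hnil) hf
      (mem_sqrtJ_of_isNilpotent .zero) (by abel)) he r

theorem mem_sqrtJ_iff_isUnit_one_add (h : IsUniquelySqrtJCleanRing R) (z : R) :
    z ∈ sqrtJ R ↔ IsUnit (1 + z) := by
  refine ⟨isUnit_one_add_of_mem_sqrtJ, fun hz ↦ ?_⟩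
  obtain ⟨⟨e, w⟩, ⟨he, hw, hadd⟩, -⟩ := h (1 + z)
  dsimp only at he hw hadd
  have hcomm (r : R) : Commute (1 - e) r := h.commute_of_isIdempotentElem he.one_sub r
  have hmul : (1 - e) * (1 + z) = (1 - e) * w := by
    rw [hadd, mul_add, he.one_sub_mul_self, zero_add]
  have hcompl : 1 - e = 0 :=
    eq_zero_of_isIdempotentElem_of_mul_mem_sqrtJ he.one_sub hz (hcomm (1 + z))
      (hmul ▸ mul_mem_sqrtJ_of_commute (hcomm w) hw)
  rw [← sub_eq_zero.1 hcompl, add_right_inj] at hadd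
  rwa [hadd]

end IsUniquelySqrtJCleanRing

theorem uniquelyClean_iff_uniquelySqrtJClean_of_mem_sqrtJ_iff {R : Type*} [Ring R]
    (h : ∀ z : R, z ∈ sqrtJ R ↔ IsUnit (1 + z)) :
    IsUniquelyCleanRing R ↔ IsUniquelySqrtJCleanRing R := by
  refine ((Equiv.addLeft (1 : R)).forall_congr fun a ↦ ?_).symm
  refine ((Equiv.refl R).prodCongr (Equiv.addLeft 1)).existsUnique_congr fun p ↦ ?_
  have hadd : a = p.1 + p.2 ↔ 1 + a = p.1 + (1 + p.2) := by
    rw [add_left_comm, add_right_inj]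
  exact and_congr_right' (and_congr (h p.2) hadd)

theorem uniquelyClean_iff_uniquelySqrtJClean (R : Type*) [Ring R] :
    IsUniquelyCleanRing R ↔ IsUniquelySqrtJCleanRing R :=
  ⟨fun h ↦ (uniquelyClean_iff_uniquelySqrtJClean_of_mem_sqrtJ_iff
      h.mem_sqrtJ_iff_isUnit_one_add).1 h,
    fun h ↦ (uniquelyClean_iff_uniquelySqrtJClean_of_mem_sqrtJ_iff
      h.mem_sqrtJ_iff_isUnit_one_add).2 h⟩
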